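/- (From μ-GDP to (ε, δ)-differential privacy.) Let P and Q be probability measures on a measurable space Ω and let μ > 0. Suppose that for every measurable set A with 0 < P(A) < 1 one has Q(A) ≤ 1 − Φ(Φ⁻¹(1 − P(A)) − μ), and that Q(A) = 0 whenever P(A) = 0. Then for every ε ≥ 0 and every measurable set A, Q(A) ≤ e^ε·P(A) + δ_μ(ε), where δ_μ(ε) = Φ(−ε/μ + μ/2) − e^ε·Φ(−ε/μ − μ/2). -/

import Mathlib

open MeasureTheory ProbabilityTheory Real

/-- The standard normal CDF `Φ`. -/
noncomputable def Phi : ℝ → ℝ := fun x => cdf (gaussianReal 0 1) x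

/-- The inverse `Φ⁻¹` of the standard normal CDF (as a function on `(0,1)`). -/
noncomputable def PhiInv : ℝ → ℝ := Function.invFun Phi

lemma Phi_integral (x : ℝ) : Phi x = ∫ y in Set.Iic x, gaussianPDFReal 0 1 y := by
  unfold Phi
  rw [cdf_eq_real, measureReal_def, gaussianReal_apply_eq_integral 0 one_ne_zero,
    ENNReal.toReal_ofReal]
  exact integral_nonneg fun y => gaussianPDFReal_nonneg _ _ _

lemma Phi_shift (m x : ℝ) : Phi (x + m) = ∫ y in Set.Iic x, gaussianPDFReal (-m) 1 y := by
  have h : Phi (x + m) = (gaussianReal (-m) 1).real (Set.Iic x) := by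
    unfold Phi
    have := gaussianReal_map_sub_const (μ := 0) (v := 1) m
    rw [zero_sub] at this
    rw [cdf_eq_real, ← this, measureReal_def, measureReal_def,
      Measure.map_apply (by fun_prop) measurableSet_Iic]
    congr 2
    ext y; simp
  rw [h, measureReal_def, gaussianReal_apply_eq_integral _ one_ne_zero,
    ENNReal.toReal_ofReal]
  exact integral_nonneg fun y => gaussianPDFReal_nonneg _ _ _

lemma Phi_neg (x : ℝ) : Phi (-x) = 1 - Phi x := by
  unfold Phi
  have h := gaussianReal_map_neg (μ := 0) (v := 1)
  rw [neg_zero] at h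
  have : NullSingletonClass (gaussianReal 0 1) := nullSingletonClass_gaussianReal one_ne_zero
  have h1 : (gaussianReal 0 1).real (Set.Iic (-x)) = (gaussianReal 0 1).real (Set.Ici x) := by
    conv_lhs => rw [← h]
    rw [measureReal_def, measureReal_def, Measure.map_apply (by fun_prop) measurableSet_Iic]
    congr 2
    ext y; simp
  rw [cdf_eq_real, cdf_eq_real, h1, ← probReal_compl_eq_one_sub measurableSet_Iic, Set.compl_Iic]
  exact measureReal_congr Ioi_ae_eq_Ici.symm

lemma Phi_continuous : Continuous Phi := by
  have h : Phi = fun x => Phi 0 + ∫ y in (0:ℝ)..x, gaussianPDFReal 0 1 y := by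
    ext x
    rw [← intervalIntegral.integral_Iic_sub_Iic
      (integrable_gaussianPDFReal 0 1).integrableOn (integrable_gaussianPDFReal 0 1).integrableOn,
      Phi_integral x, Phi_integral 0]
    ring
  rw [h]
  exact continuous_const.add (intervalIntegral.continuous_primitive
    (fun a b => (integrable_gaussianPDFReal 0 1).intervalIntegrable) 0)

lemma Phi_PhiInv (p : ℝ) (h0 : 0 < p) (h1 : p < 1) : Phi (PhiInv p) = p := by
  apply Function.invFun_eq
  exact mem_range_of_exists_le_of_exists_ge Phi_continuous
    (((tendsto_cdf_atBot (gaussianReal 0 1)).eventually_le_const h0).exists)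
    (((tendsto_cdf_atTop (gaussianReal 0 1)).eventually_const_le h1).exists)

lemma pdf_ratio (m x : ℝ) : gaussianPDFReal (-m) 1 x =
    Real.exp (-(m * x) - m ^ 2 / 2) * gaussianPDFReal 0 1 x := by
  simp only [gaussianPDFReal]
  rw [mul_left_comm, ← Real.exp_add]
  congr 2
  simp only [NNReal.coe_one]
  ring

lemma F_int (m e s : ℝ) : Phi (s + m) - Real.exp e * Phi s =
    ∫ x in Set.Iic s, (gaussianPDFReal (-m) 1 x - Real.exp e * gaussianPDFReal 0 1 x) := by
  rw [integral_sub (integrable_gaussianPDFReal _ _).integrableOn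
    ((integrable_gaussianPDFReal _ _).const_mul _).integrableOn, integral_const_mul,
    Phi_shift, Phi_integral]

lemma g_nonneg (m e x : ℝ) (hm : 0 < m) (hx : x ≤ -e / m - m / 2) :
    0 ≤ gaussianPDFReal (-m) 1 x - Real.exp e * gaussianPDFReal 0 1 x := by
  rw [pdf_ratio, ← sub_mul]
  refine mul_nonneg (sub_nonneg.2 (Real.exp_le_exp.2 ?_)) (gaussianPDFReal_nonneg _ _ _)
  have := mul_le_mul_of_nonneg_left hx hm.le
  have h2 : m * (-e / m - m / 2) = -e - m ^ 2 / 2 := by field_simp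
  linarith

lemma g_nonpos (m e x : ℝ) (hm : 0 < m) (hx : -e / m - m / 2 ≤ x) :
    gaussianPDFReal (-m) 1 x - Real.exp e * gaussianPDFReal 0 1 x ≤ 0 := by
  rw [pdf_ratio, ← sub_mul]
  refine mul_nonpos_of_nonpos_of_nonneg (sub_nonpos.2 (Real.exp_le_exp.2 ?_))
    (gaussianPDFReal_nonneg _ _ _)
  have := mul_le_mul_of_nonneg_left hx hm.le
  have h2 : m * (-e / m - m / 2) = -e - m ^ 2 / 2 := by field_simp
  linarith

lemma F_le (m e s : ℝ) (hm : 0 < m) : Phi (s + m) - Real.exp e * Phi s ≤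
    Phi (-e / m + m / 2) - Real.exp e * Phi (-e / m - m / 2) := by
  have h : -e / m + m / 2 = (-e / m - m / 2) + m := by ring
  rw [h, F_int, F_int]
  have hi : Integrable (fun x => gaussianPDFReal (-m) 1 x - Real.exp e * gaussianPDFReal 0 1 x) :=
    (integrable_gaussianPDFReal _ _).sub ((integrable_gaussianPDFReal _ _).const_mul _)
  rcases le_total s (-e / m - m / 2) with hs | hs
  · rw [← sub_nonneg, intervalIntegral.integral_Iic_sub_Iic hi.integrableOn hi.integrableOn]
    exact intervalIntegral.integral_nonneg hs fun u hu => g_nonneg m e u hm hu.2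
  · rw [← sub_nonpos, intervalIntegral.integral_Iic_sub_Iic hi.integrableOn hi.integrableOn,
      ← neg_nonneg, ← intervalIntegral.integral_neg]
    exact intervalIntegral.integral_nonneg hs fun u hu => neg_nonneg.2 (g_nonpos m e u hm hu.1)

lemma F_nonneg (m e : ℝ) (hm : 0 < m) : 0 ≤
    Phi (-e / m + m / 2) - Real.exp e * Phi (-e / m - m / 2) := by
  have h : -e / m + m / 2 = (-e / m - m / 2) + m := by ring
  rw [h, F_int]
  exact setIntegral_nonneg measurableSet_Iic fun x hx => g_nonneg m e x hm hx

/-- From `μ`-GDP to `(ε, δ)`-differential privacy: if the pair `(P, Q)` satisfies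
the `μ`-GDP trade-off bound on indicator tests, then it satisfies the
`(ε, δ_μ(ε))`-DP (hockey-stick) inequality for every `ε ≥ 0`. -/
theorem stmt_4 {Ω : Type*} [MeasurableSpace Ω] (P Q : Measure Ω)
    [IsProbabilityMeasure P] [IsProbabilityMeasure Q] (μ : ℝ) (hμ : 0 < μ)
    (hGDP : ∀ A : Set Ω, MeasurableSet A → 0 < (P A).toReal → (P A).toReal < 1 →
      (Q A).toReal ≤ 1 - Phi (PhiInv (1 - (P A).toReal) - μ))
    (hzero : ∀ A : Set Ω, MeasurableSet A → P A = 0 → Q A = 0)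
    (ε : ℝ) (hε : 0 ≤ ε) (A : Set Ω) (hA : MeasurableSet A) :
    (Q A).toReal ≤ Real.exp ε * (P A).toReal +
      (Phi (-ε / μ + μ / 2) - Real.exp ε * Phi (-ε / μ - μ / 2)) := by
  have hF := F_nonneg μ ε hμ
  have he : 1 ≤ Real.exp ε := Real.one_le_exp hε
  have hQ1 : (Q A).toReal ≤ 1 := measureReal_le_one
  have hP1 : (P A).toReal ≤ 1 := measureReal_le_one
  have hP0 : 0 ≤ (P A).toReal := ENNReal.toReal_nonneg
  rcases hP0.eq_or_lt with h0 | h0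
  · have : P A = 0 := ((ENNReal.toReal_eq_zero_iff _).1 h0.symm).resolve_right (measure_ne_top _ _)
    rw [hzero A hA this, this]
    simpa using hF
  rcases hP1.eq_or_lt with h1 | h1
  · rw [h1]; linarith
  have h := hGDP A hA h0 h1
  have ht := Phi_PhiInv (1 - (P A).toReal) (by linarith) (by linarith)
  set t := PhiInv (1 - (P A).toReal)
  have hF2 := F_le μ ε (-t) hμ
  have e1 : -t + μ = -(t - μ) := by ring
  rw [e1, Phi_neg, Phi_neg, ht, sub_sub_cancel] at hF2
  linarith
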